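/- arXiv:1811.11970 — 7 statements merged into one kernel-verified Lean document; each statement's English description precedes it below -/
import Mathlib

section
/- For every fixed integer vector z of parking-space pairs, the linear program (OP) has an integral optimal solution. Precisely: there exists a feasible solution (F^{t+}, F^{t-}, E^t)_{t∈T} all of whose entries are integers whose objective value Σ_{t∈T} Σ_{n,n'∈N} E^t_{n,n'} is less than or equal to the objective value of every feasible solution. -/
open Finset

/-- Feasibility of a solution `(F⁺, F⁻, E)` of the linear program (OP) for a fixed
vector `z` of parking-space pairs.  `Nb s n` means node `n` is in the neighbourhood of
station `s`; `v t` is the pair capacity in time period `t`; `OD t` is the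
origin–destination matrix in time period `t`. -/
def OPFeasible {T N S : Type*} [Fintype N] [Fintype S]
    (Nb : S → N → Prop) [∀ s n, Decidable (Nb s n)]
    (v : T → ℕ) (OD : T → N → N → ℕ) (z : S → ℕ)
    (Fp Fm : T → S → N → ℝ) (E : T → N → N → ℝ) : Prop :=
  (∀ t s n, 0 ≤ Fp t s n) ∧ (∀ t s n, 0 ≤ Fm t s n) ∧ (∀ t n n', 0 ≤ E t n n') ∧
  (∀ t s n, ¬ Nb s n → Fp t s n = 0) ∧ (∀ t s n, ¬ Nb s n → Fm t s n = 0) ∧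
  -- (1) station capacity
  (∀ t s, ∑ n ∈ univ.filter (fun n => Nb s n), (Fp t s n + Fm t s n) ≤ (v t : ℝ) * z s) ∧
  -- (2) inward flow assignment
  (∀ t n, ∑ s ∈ univ.filter (fun s => Nb s n), Fp t s n + ∑ n' : N, E t n' n
      = ∑ n' : N, (OD t n' n : ℝ)) ∧
  -- (3) outward flow assignment
  (∀ t n, ∑ s ∈ univ.filter (fun s => Nb s n), Fm t s n + ∑ n' : N, E t n n'
      = ∑ n' : N, (OD t n n' : ℝ)) ∧
  -- (4) zero net flow at each station
  (∀ t s, ∑ n ∈ univ.filter (fun n => Nb s n), (Fp t s n - Fm t s n) = 0) ∧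
  -- (5) unsatisfied trips correspond to actual trips
  (∀ t n n', E t n n' ≤ (OD t n n' : ℝ))

/-- integers in the reals -/
abbrev ZZ : AddSubgroup ℝ := (Int.castAddHom ℝ).range

lemma mem_ZZ {x : ℝ} : x ∈ ZZ ↔ ∃ k : ℤ, x = k := by
  constructor
  · rintro ⟨k, hk⟩
    exact ⟨k, hk.symm⟩
  · rintro ⟨k, hk⟩
    exact ⟨k, hk.symm⟩

lemma exists_kernel {R C : Type*} [Fintype R] [Fintype C] [DecidableEq R] [DecidableEq C]
    (P : Finset (R × C)) (hne : P.Nonempty)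
    (hr : ∀ p ∈ P, ∃ q ∈ P, q ≠ p ∧ q.1 = p.1)
    (hc : ∀ p ∈ P, ∃ q ∈ P, q ≠ p ∧ q.2 = p.2) :
    ∃ D : R × C → ℝ, D ≠ 0 ∧ (∀ p, p ∉ P → D p = 0) ∧
      (∀ r, ∑ c, D (r, c) = 0) ∧ (∀ c, ∑ r, D (r, c) = 0) := by
  have hA : 2 * (P.image Prod.fst).card ≤ P.card := by
    apply Finset.mul_card_image_le_card
    intro b hb
    obtain ⟨p, hp, rfl⟩ := Finset.mem_image.1 hb
    obtain ⟨q, hq, hqp, h⟩ := hr p hp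
    exact Finset.one_lt_card.2 ⟨q, by simp [hq, h], p, by simp [hp], hqp⟩
  have hB : 2 * (P.image Prod.snd).card ≤ P.card := by
    apply Finset.mul_card_image_le_card
    intro b hb
    obtain ⟨p, hp, rfl⟩ := Finset.mem_image.1 hb
    obtain ⟨q, hq, hqp, h⟩ := hc p hp
    exact Finset.one_lt_card.2 ⟨q, by simp [hq, h], p, by simp [hp], hqp⟩
  obtain ⟨p0, hp0⟩ := hne
  let ext : (P → ℝ) →ₗ[ℝ] (R × C → ℝ) :=
    { toFun := fun x p => if h : p ∈ P then x ⟨p, h⟩ else 0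
      map_add' := by
        intro x y; ext p; by_cases h : p ∈ P <;> simp [h]
      map_smul' := by
        intro a y; ext p; by_cases h : p ∈ P <;> simp [h] }
  let L : (R × C → ℝ) →ₗ[ℝ]
      (({r // r ∈ (P.image Prod.fst).erase p0.1} → ℝ) × ({c // c ∈ P.image Prod.snd} → ℝ)) :=
    { toFun := fun x => (fun r => ∑ c, x (r.1, c), fun c => ∑ r, x (r, c.1))
      map_add' := by
        intro x y; ext <;> simp [Finset.sum_add_distrib]
      map_smul' := by
        intro a y; ext <;> simp [Finset.mul_sum] }
  have hker : LinearMap.ker (L ∘ₗ ext) ≠ ⊥ := by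
    apply LinearMap.ker_ne_bot_of_finrank_lt
    have h1 : p0.1 ∈ P.image Prod.fst := Finset.mem_image_of_mem _ hp0
    have h2 := Finset.card_erase_lt_of_mem h1
    simp only [Module.finrank_prod, Module.finrank_fintype_fun_eq_card, Fintype.card_coe]
    omega
  obtain ⟨x, hx, hx0⟩ := Submodule.exists_mem_ne_zero_of_ne_bot hker
  have hsupp : ∀ p, p ∉ P → ext x p = 0 := by
    intro p hp; simp [ext, hp]
  have hL : L (ext x) = 0 := hx
  have hcol : ∀ c, ∑ r, ext x (r, c) = 0 := by
    intro c
    by_cases h : c ∈ P.image Prod.snd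
    · exact congrFun (congrArg Prod.snd hL) ⟨c, h⟩
    · apply Finset.sum_eq_zero
      intro r _
      apply hsupp
      intro h'
      exact h (Finset.mem_image.2 ⟨_, h', rfl⟩)
  have hrow : ∀ r, r ≠ p0.1 → ∑ c, ext x (r, c) = 0 := by
    intro r hrr
    by_cases h : r ∈ P.image Prod.fst
    · exact congrFun (congrArg Prod.fst hL) ⟨r, Finset.mem_erase.2 ⟨hrr, h⟩⟩
    · apply Finset.sum_eq_zero
      intro c _
      apply hsupp
      intro h'
      exact h (Finset.mem_image.2 ⟨_, h', rfl⟩)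
  refine ⟨ext x, ?_, hsupp, ?_, hcol⟩
  · intro h
    apply hx0
    ext p
    have := congrFun h p.1
    simpa [ext] using this
  · intro r
    by_cases h : r = p0.1
    · subst h
      have h1 : ∑ r, ∑ c, ext x (r, c) = 0 := by
        rw [Finset.sum_comm]; simp [hcol]
      rwa [Finset.sum_eq_single p0.1 (fun r _ h => hrow r h) (by simp)] at h1
    · exact hrow r h

lemma step {R C : Type*} [Fintype R] [Fintype C] [DecidableEq R] [DecidableEq C]
    (P : Finset (R × C)) (X D w : R × C → ℝ) (hP : ∀ p, p ∈ P ↔ X p ∉ ZZ)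
    (hD : D ≠ 0) (hsupp : ∀ p, p ∉ P → D p = 0) (hw : ∑ p, w p * D p ≤ 0) :
    ∃ e : ℝ, 0 ≤ e ∧ (∃ p ∈ P, X p + e * D p ∈ ZZ) ∧
      ∀ p, (∀ k : ℤ, (k : ℝ) ≤ X p → (k : ℝ) ≤ X p + e * D p) ∧
        (∀ k : ℤ, X p ≤ k → X p + e * D p ≤ k) := by
  let Q := P.filter (fun p => D p ≠ 0)
  have hQ : Q.Nonempty := by
    obtain ⟨p, hp⟩ := Function.ne_iff.1 hD
    refine ⟨p, Finset.mem_filter.2 ⟨?_, hp⟩⟩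
    by_contra h
    exact hp (hsupp p h)
  let g : R × C → ℝ := fun p => if 0 < D p then (⌈X p⌉ - X p) / D p else (⌊X p⌋ - X p) / D p
  have hg : ∀ p, 0 ≤ g p := by
    intro p
    simp only [g]
    split_ifs with h
    · exact div_nonneg (sub_nonneg.2 (Int.le_ceil _)) h.le
    · exact div_nonneg_of_nonpos (sub_nonpos.2 (Int.floor_le _)) (not_lt.1 h)
  obtain ⟨p0, hp0, hmin⟩ := Finset.exists_min_image Q g hQ
  obtain ⟨hp0P, hp0D⟩ := Finset.mem_filter.1 hp0
  refine ⟨g p0, hg _, ⟨p0, hp0P, ?_⟩, ?_⟩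
  · rw [mem_ZZ]
    simp only [g]
    split_ifs with h
    · exact ⟨⌈X p0⌉, by field_simp; ring⟩
    · exact ⟨⌊X p0⌋, by field_simp; ring⟩
  · intro p
    by_cases hp : D p = 0
    · simp [hp]
    have hpQ : p ∈ Q := by
      refine Finset.mem_filter.2 ⟨?_, hp⟩
      by_contra h
      exact hp (hsupp p h)
    have h1 := hmin p hpQ
    rcases lt_or_gt_of_ne hp with h | h
    · have h2 : g p * D p = ⌊X p⌋ - X p := by
        simp only [g, if_neg (not_lt.2 h.le)]; field_simp
      have h3 : g p * D p ≤ g p0 * D p := mul_le_mul_of_nonpos_right h1 h.le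
      have h4 : g p0 * D p ≤ 0 := mul_nonpos_of_nonneg_of_nonpos (hg _) h.le
      refine ⟨fun k hk => ?_, fun k hk => by linarith⟩
      have : (k : ℝ) ≤ ⌊X p⌋ := by exact_mod_cast Int.le_floor.2 hk
      linarith
    · have h2 : g p * D p = ⌈X p⌉ - X p := by
        simp only [g, if_pos h]; field_simp
      have h3 : g p0 * D p ≤ g p * D p := mul_le_mul_of_nonneg_right h1 h.le
      have h4 : 0 ≤ g p0 * D p := mul_nonneg (hg _) h.le
      refine ⟨fun k hk => by linarith, fun k hk => ?_⟩
      have : (⌈X p⌉ : ℝ) ≤ k := by exact_mod_cast Int.ceil_le.2 hk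
      linarith

lemma transport_round {R C : Type*} [Fintype R] [Fintype C] [DecidableEq R] [DecidableEq C]
    (w : R × C → ℝ) : ∀ (m : ℕ) (P : Finset (R × C)) (X : R × C → ℝ), P.card = m →
      (∀ p, p ∈ P ↔ X p ∉ ZZ) →
      (∀ r, ∑ c, X (r, c) ∈ ZZ) → (∀ c, ∑ r, X (r, c) ∈ ZZ) →
      ∃ Y : R × C → ℝ, (∀ p, Y p ∈ ZZ) ∧
        (∀ r, ∑ c, Y (r, c) = ∑ c, X (r, c)) ∧ (∀ c, ∑ r, Y (r, c) = ∑ r, X (r, c)) ∧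
        (∀ p, (∀ k : ℤ, (k : ℝ) ≤ X p → (k : ℝ) ≤ Y p) ∧ (∀ k : ℤ, X p ≤ k → Y p ≤ k)) ∧
        ∑ p, w p * Y p ≤ ∑ p, w p * X p := by
  intro m
  induction m using Nat.strong_induction_on with
  | _ m ih =>
  intro P X hm hP hrow hcol
  rcases P.eq_empty_or_nonempty with h | hne
  · refine ⟨X, ?_, by simp, by simp, by simp, le_rfl⟩
    intro p
    by_contra hp
    have := (hP p).2 hp
    simp [h] at this
  have hr : ∀ p ∈ P, ∃ q ∈ P, q ≠ p ∧ q.1 = p.1 := by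
    intro p hp
    by_contra! hcon
    apply (hP p).1 hp
    have h1 := Finset.add_sum_erase Finset.univ (fun c => X (p.1, c)) (Finset.mem_univ p.2)
    have h2 : ∑ c ∈ Finset.univ.erase p.2, X (p.1, c) ∈ ZZ := by
      apply AddSubgroup.sum_mem
      intro c hc
      by_contra h
      refine hcon (p.1, c) ((hP _).2 h) ?_ rfl
      intro h'
      exact (Finset.mem_erase.1 hc).1 (congrArg Prod.snd h')
    have h3 := ZZ.sub_mem (hrow p.1) h2
    rw [← h1] at h3
    simpa using h3
  have hc : ∀ p ∈ P, ∃ q ∈ P, q ≠ p ∧ q.2 = p.2 := by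
    intro p hp
    by_contra! hcon
    apply (hP p).1 hp
    have h1 := Finset.add_sum_erase Finset.univ (fun c => X (c, p.2)) (Finset.mem_univ p.1)
    have h2 : ∑ c ∈ Finset.univ.erase p.1, X (c, p.2) ∈ ZZ := by
      apply AddSubgroup.sum_mem
      intro c hc
      by_contra h
      refine hcon (c, p.2) ((hP _).2 h) ?_ rfl
      intro h'
      exact (Finset.mem_erase.1 hc).1 (congrArg Prod.fst h')
    have h3 := ZZ.sub_mem (hcol p.2) h2
    rw [← h1] at h3
    simpa using h3
  have hD : ∃ D : R × C → ℝ, D ≠ 0 ∧ (∀ p, p ∉ P → D p = 0) ∧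
      (∀ r, ∑ c, D (r, c) = 0) ∧ (∀ c, ∑ r, D (r, c) = 0) ∧ ∑ p, w p * D p ≤ 0 := by
    obtain ⟨D, h1, h2, h3, h4⟩ := exists_kernel P hne hr hc
    rcases le_total (∑ p, w p * D p) 0 with h | h
    · exact ⟨D, h1, h2, h3, h4, h⟩
    · refine ⟨-D, neg_ne_zero.2 h1, ?_, ?_, ?_, ?_⟩
      · intro p hp; simp [h2 p hp]
      · intro r; simp [h3]
      · intro r; simp [h4]
      · simpa using h
  obtain ⟨D, hD0, hsupp, hDr, hDc, hw⟩ := hD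
  obtain ⟨e, he, ⟨p0, hp0, hp0Z⟩, hb⟩ := step P X D w hP hD0 hsupp hw
  classical
  let X' : R × C → ℝ := fun p => X p + e * D p
  have hr' : ∀ r, ∑ c, X' (r, c) = ∑ c, X (r, c) := by
    intro r; simp [X', Finset.sum_add_distrib, ← Finset.mul_sum, hDr]
  have hc' : ∀ c, ∑ r, X' (r, c) = ∑ r, X (r, c) := by
    intro r; simp [X', Finset.sum_add_distrib, ← Finset.mul_sum, hDc]
  have hlt : (P.filter (fun p => X' p ∉ ZZ)).card < m := by
    rw [← hm]
    apply Finset.card_lt_card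
    rw [Finset.filter_ssubset]
    exact ⟨p0, hp0, not_not.2 hp0Z⟩
  obtain ⟨Y, y1, y2, y3, y4, y5⟩ := ih _ hlt (P.filter (fun p => X' p ∉ ZZ)) X' rfl
    (by
      intro p
      rw [Finset.mem_filter]
      refine ⟨fun h => h.2, fun h => ⟨?_, h⟩⟩
      by_contra hp
      apply h
      simp only [X', hsupp p hp, mul_zero, add_zero]
      by_contra h'
      exact hp ((hP p).2 h'))
    (fun r => by rw [hr']; exact hrow r) (fun c => by rw [hc']; exact hcol c)
  refine ⟨Y, y1, fun r => (y2 r).trans (hr' r), fun c => (y3 c).trans (hc' c), ?_, ?_⟩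
  · intro p
    exact ⟨fun k hk => (y4 p).1 k ((hb p).1 k hk), fun k hk => (y4 p).2 k ((hb p).2 k hk)⟩
  · refine y5.trans ?_
    have : ∑ p, w p * X' p = ∑ p, w p * X p + e * ∑ p, w p * D p := by
      rw [Finset.mul_sum, ← Finset.sum_add_distrib]
      apply Finset.sum_congr rfl
      intro p _
      simp only [X']; ring
    rw [this]
    nlinarith [mul_nonpos_of_nonneg_of_nonpos he hw]

lemma OP_round {T N S : Type*} [Fintype T] [Fintype N] [Fintype S]
    (Nb : S → N → Prop) [∀ s n, Decidable (Nb s n)]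
    (v : T → ℕ) (hv_even : ∀ t, Even (v t))
    (OD : T → N → N → ℕ) (z : S → ℕ) (Fp Fm : T → S → N → ℝ) (E : T → N → N → ℝ)
    (h : OPFeasible Nb v OD z Fp Fm E) :
    ∃ Fp' Fm' : T → S → N → ℝ, ∃ E' : T → N → N → ℝ,
      OPFeasible Nb v OD z Fp' Fm' E' ∧
      (∀ t s n, Fp' t s n ∈ ZZ) ∧ (∀ t s n, Fm' t s n ∈ ZZ) ∧ (∀ t n n', E' t n n' ∈ ZZ) ∧
      ∑ t : T, ∑ n : N, ∑ n' : N, E' t n n' ≤ ∑ t : T, ∑ n : N, ∑ n' : N, E t n n' := by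
  classical
  obtain ⟨p1, p2, p3, n1, n2, c1, c2, c3, c4, c5⟩ := h
  choose u hu using hv_even
  have sf : ∀ (F : T → S → N → ℝ), (∀ t s n, ¬ Nb s n → F t s n = 0) → ∀ t s,
      ∑ n ∈ univ.filter (fun n => Nb s n), F t s n = ∑ n, F t s n := by
    intro F hF t s
    apply Finset.sum_filter_of_ne
    intro n _ h
    by_contra h'
    exact h (hF t s n h')
  have sf' : ∀ (F : T → S → N → ℝ), (∀ t s n, ¬ Nb s n → F t s n = 0) → ∀ t n,
      ∑ s ∈ univ.filter (fun s => Nb s n), F t s n = ∑ s, F t s n := by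
    intro F hF t s
    apply Finset.sum_filter_of_ne
    intro n _ h
    by_contra h'
    exact h (hF t _ _ h')
  simp only [Finset.sum_add_distrib, Finset.sum_sub_distrib, sf Fp n1, sf Fm n2, sf' Fp n1,
    sf' Fm n2] at c1 c2 c3 c4
  let X : T → (N ⊕ S) × (N ⊕ S) → ℝ := fun t p => match p with
    | (.inl n, .inl n') => E t n n'
    | (.inl n, .inr s) => Fm t s n
    | (.inr s, .inl n) => Fp t s n
    | (.inr s, .inr s') => if s = s' then (u t : ℝ) * z s - ∑ n, Fm t s n else 0
  let w : (N ⊕ S) × (N ⊕ S) → ℝ := fun p => match p with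
    | (.inl n, .inl n') => 1
    | _ => 0
  have hrl : ∀ t n, ∑ c, X t (.inl n, c) = ∑ n' : N, (OD t n n' : ℝ) := by
    intro t n
    rw [Fintype.sum_sum_type, ← c3 t n, add_comm]
  have hrr : ∀ t s, ∑ c, X t (.inr s, c) = (u t : ℝ) * z s := by
    intro t s
    rw [Fintype.sum_sum_type]
    have := c4 t s
    simp [X]
    linarith
  have hcl : ∀ t n, ∑ r, X t (r, .inl n) = ∑ n' : N, (OD t n' n : ℝ) := by
    intro t n
    rw [Fintype.sum_sum_type, ← c2 t n, add_comm]
  have hcr : ∀ t s, ∑ r, X t (r, .inr s) = (u t : ℝ) * z s := by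
    intro t s
    rw [Fintype.sum_sum_type]
    simp [X]
  have Y := fun t => transport_round w _ (Finset.univ.filter (fun p => X t p ∉ ZZ)) (X t) rfl
    (by simp)
    (by
      rintro (n | s)
      · rw [hrl, mem_ZZ]; exact ⟨∑ n', (OD t n n' : ℤ), by push_cast; rfl⟩
      · rw [hrr, mem_ZZ]; exact ⟨(u t : ℤ) * z s, by push_cast; rfl⟩)
    (by
      rintro (n | s)
      · rw [hcl, mem_ZZ]; exact ⟨∑ n', (OD t n' n : ℤ), by push_cast; rfl⟩
      · rw [hcr, mem_ZZ]; exact ⟨(u t : ℤ) * z s, by push_cast; rfl⟩)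
  choose Y hZ hYr hYc hb hobj using Y
  have hY0 : ∀ t p, X t p = 0 → Y t p = 0 := by
    intro t p h
    have h1 := (hb t p).1 0 (by simp [h])
    have h2 := (hb t p).2 0 (by simp [h])
    push_cast at h1 h2
    linarith
  have hYn : ∀ t p, 0 ≤ X t p → 0 ≤ Y t p := by
    intro t p h
    have h1 := (hb t p).1 0 (by simpa using h)
    simpa using h1
  have hYd : ∀ t s, ∑ s', Y t (.inr s, .inr s') = Y t (.inr s, .inr s) := by
    intro t s
    apply Finset.sum_eq_single s _ (by simp)
    intro s' _ h
    exact hY0 _ _ (by simp [X, h.symm])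
  have hYd' : ∀ t s, ∑ s', Y t (.inr s', .inr s) = Y t (.inr s, .inr s) := by
    intro t s
    apply Finset.sum_eq_single s _ (by simp)
    intro s' _ h
    exact hY0 _ _ (by simp [X, h])
  have hdn : ∀ t s, 0 ≤ Y t (.inr s, .inr s) := by
    intro t s
    apply hYn
    have h1 := c1 t s
    have h2 := c4 t s
    rw [hu t] at h1
    push_cast at h1
    simp [X]
    linarith
  have m1 : ∀ t s n, ¬ Nb s n → Y t (.inr s, .inl n) = 0 := fun t s n h => hY0 _ _ (n1 t s n h)
  have m2 : ∀ t s n, ¬ Nb s n → Y t (.inl n, .inr s) = 0 := fun t s n h => hY0 _ _ (n2 t s n h)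
  have g1 : ∀ t s, ∑ n, Y t (.inr s, .inl n) + Y t (.inr s, .inr s) = (u t : ℝ) * z s := by
    intro t s
    rw [← hrr, ← hYr, Fintype.sum_sum_type, hYd]
  have g2 : ∀ t s, ∑ n, Y t (.inl n, .inr s) + Y t (.inr s, .inr s) = (u t : ℝ) * z s := by
    intro t s
    rw [← hcr, ← hYc, Fintype.sum_sum_type, hYd']
  refine ⟨fun t s n => Y t (.inr s, .inl n), fun t s n => Y t (.inl n, .inr s),
    fun t n n' => Y t (.inl n, .inl n'), ⟨fun t s n => hYn _ _ (p1 t s n),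
      fun t s n => hYn _ _ (p2 t s n), fun t s n => hYn _ _ (p3 t s n), m1, m2, ?_, ?_, ?_, ?_, ?_⟩,
      fun t s n => hZ _ _, fun t s n => hZ _ _, fun t s n => hZ _ _, ?_⟩
  · intro t s
    have a1 := sf _ m1 t s
    have a2 := sf _ m2 t s
    rw [Finset.sum_add_distrib, a1, a2, hu t]
    push_cast
    linarith [g1 t s, g2 t s, hdn t s]
  · intro t n
    have a1 := sf' _ m1 t n
    rw [a1, ← hcl, ← hYc, Fintype.sum_sum_type, add_comm]
  · intro t n
    have a1 := sf' _ m2 t n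
    rw [a1, ← hrl, ← hYr, Fintype.sum_sum_type, add_comm]
  · intro t s
    have a1 := sf _ m1 t s
    have a2 := sf _ m2 t s
    rw [Finset.sum_sub_distrib, a1, a2]
    linarith [g1 t s, g2 t s]
  · intro t n n'
    have := (hb t (.inl n, .inl n')).2 (OD t n n') (by simpa using c5 t n n')
    simpa using this
  · apply Finset.sum_le_sum
    intro t _
    have := hobj t
    simpa [Fintype.sum_prod_type, w, X] using this


/-- Property 1 of the paper. For every fixed integer vector `z` of
parking-space pairs, the linear program (OP) has an integral optimal solution: there is a
feasible solution all of whose entries are integers whose objective value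
`∑ t, ∑ n n', E t n n'` is at most the objective value of every feasible solution. -/
theorem OP_has_integral_optimal_solution
    {T N S : Type*} [Fintype T] [Fintype N] [Fintype S]
    (Nb : S → N → Prop) [∀ s n, Decidable (Nb s n)]
    (v : T → ℕ) (hv_pos : ∀ t, 0 < v t) (hv_even : ∀ t, Even (v t))
    (OD : T → N → N → ℕ) (z : S → ℕ) :
    ∃ Fp Fm : T → S → N → ℝ, ∃ E : T → N → N → ℝ,
      OPFeasible Nb v OD z Fp Fm E ∧
      (∀ t s n, ∃ k : ℤ, Fp t s n = k) ∧
      (∀ t s n, ∃ k : ℤ, Fm t s n = k) ∧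
      (∀ t n n', ∃ k : ℤ, E t n n' = k) ∧
      (∀ Fp' Fm' : T → S → N → ℝ, ∀ E' : T → N → N → ℝ,
        OPFeasible Nb v OD z Fp' Fm' E' →
          ∑ t : T, ∑ n : N, ∑ n' : N, E t n n' ≤ ∑ t : T, ∑ n : N, ∑ n' : N, E' t n n') := by
  classical
  let Q : ℕ → Prop := fun k => ∃ Fp Fm : T → S → N → ℝ, ∃ E : T → N → N → ℝ,
      OPFeasible Nb v OD z Fp Fm E ∧
      (∀ t s n, Fp t s n ∈ ZZ) ∧ (∀ t s n, Fm t s n ∈ ZZ) ∧ (∀ t n n', E t n n' ∈ ZZ) ∧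
      ∑ t : T, ∑ n : N, ∑ n' : N, E t n n' = k
  have key : ∀ Fp Fm : T → S → N → ℝ, ∀ E : T → N → N → ℝ,
      OPFeasible Nb v OD z Fp Fm E →
        ∃ k, Q k ∧ (k : ℝ) ≤ ∑ t : T, ∑ n : N, ∑ n' : N, E t n n' := by
    intro Fp Fm E h
    obtain ⟨Fp', Fm', E', h1, h2, h3, h4, h5⟩ := OP_round Nb v hv_even OD z Fp Fm E h
    have h6 : ∑ t : T, ∑ n : N, ∑ n' : N, E' t n n' ∈ ZZ :=
      AddSubgroup.sum_mem _ fun t _ => AddSubgroup.sum_mem _ fun n _ =>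
        AddSubgroup.sum_mem _ fun n' _ => h4 t n n'
    obtain ⟨k, hk⟩ := mem_ZZ.1 h6
    have h7 : 0 ≤ ∑ t : T, ∑ n : N, ∑ n' : N, E' t n n' :=
      Finset.sum_nonneg fun t _ => Finset.sum_nonneg fun n _ =>
        Finset.sum_nonneg fun n' _ => h1.2.2.1 t n n'
    rw [hk] at h7
    lift k to ℕ using (by exact_mod_cast h7)
    push_cast at hk
    exact ⟨k, ⟨Fp', Fm', E', h1, h2, h3, h4, hk⟩, hk ▸ h5⟩
  have hex : ∃ k, Q k := by
    obtain ⟨k, hk, _⟩ := key (fun _ _ _ => 0) (fun _ _ _ => 0) (fun t n n' => OD t n n') (by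
      refine ⟨by simp, by simp, by simp, by simp, by simp, ?_, by simp, by simp, by simp, by simp⟩
      intro t s
      simp only [add_zero, Finset.sum_const_zero]
      positivity)
    exact ⟨k, hk⟩
  obtain ⟨Fp, Fm, E, h1, h2, h3, h4, h5⟩ := Nat.find_spec hex
  refine ⟨Fp, Fm, E, h1, fun t s n => mem_ZZ.1 (h2 t s n), fun t s n => mem_ZZ.1 (h3 t s n),
    fun t s n => mem_ZZ.1 (h4 t s n), ?_⟩
  intro Fp' Fm' E' h
  obtain ⟨k, hk, hle⟩ := key Fp' Fm' E' h
  rw [h5]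
  refine le_trans ?_ hle
  exact_mod_cast Nat.find_min' hex hk
end

section
/- A matrix A with entries in {−1, 0, 1} is totally unimodular if and only if every collection J of columns of A can be split into two parts J₁ and J₂ such that the sum of the columns in J₁ minus the sum of the columns in J₂ is a vector all of whose entries equal 0, 1, or −1. -/
open Matrix in
theorem gh_det {m n : Type*} [DecidableEq n] (A : Matrix m n ℤ)
    (h : ∀ J : Finset n, ∃ y : n → ℤ, (∀ j ∈ J, y j = 1 ∨ y j = -1) ∧
      ∀ i, |∑ j ∈ J, A i j * y j| ≤ 1) :
    ∀ (k : ℕ) (f : Fin k → m) (g : Fin k → n), g.Injective → |(A.submatrix f g).det| ≤ 1 := by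
  intro k
  induction k with
  | zero => intro f g _; simp
  | succ k ih =>
    intro f g hg
    set B := A.submatrix f g with hB
    by_cases hd : B.det = 0
    · simp [hd]
    have hadj : ∀ i j, |B.adjugate i j| ≤ 1 := by
      intro i j
      rw [adjugate_fin_succ_eq_det_submatrix, abs_mul, abs_pow, abs_neg, abs_one, one_pow, one_mul,
        hB, submatrix_submatrix]
      exact ih _ _ (hg.comp (Fin.succAbove_right_injective))
    set b : Fin (k+1) → ℤ := fun j => B.adjugate j 0 with hb
    have hBb : ∀ i, ∑ j, B i j * b j = if i = 0 then B.det else 0 := by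
      intro i
      have := congrFun (congrFun (mul_adjugate B) i) 0
      rw [mul_apply] at this
      rw [this]; simp [one_apply]
    have hinj : ∀ w : Fin (k+1) → ℤ, B *ᵥ w = 0 → w = 0 := fun w hw =>
      eq_zero_of_mulVec_eq_zero hd hw
    obtain ⟨j0, hj0⟩ : ∃ j, b j ≠ 0 := by
      by_contra! hc
      have := hBb 0
      simp [hc] at this
      exact hd this.symm
    set J : Finset (Fin (k+1)) := Finset.univ.filter (fun j => b j ≠ 0) with hJ
    obtain ⟨y', hy1, hy2⟩ := h (J.image g)
    set y : Fin (k+1) → ℤ := fun j => if b j ≠ 0 then y' (g j) else 0 with hy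
    have hy3 : ∀ i, |(B *ᵥ y) i| ≤ 1 := by
      intro i
      have := hy2 (f i)
      rw [Finset.sum_image (fun a _ b _ e => hg e)] at this
      convert this using 2
      rw [hJ, Finset.sum_filter]
      simp only [mulVec, dotProduct, hB, hy, submatrix_apply]
      apply Finset.sum_congr rfl
      intro j _
      split_ifs <;> simp
    have hyb : ∀ j, ∃ c, b j = y j + 2 * c := by
      intro j
      have h1 := abs_le.1 (hadj j 0)
      by_cases hj : b j = 0
      · exact ⟨0, by simp [hy, hj]⟩
      · have h2 := hy1 (g j) (Finset.mem_image_of_mem _ (by simp [hJ, hj]))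
        have h3 : y j = y' (g j) := by simp [hy, hj]
        change -1 ≤ b j ∧ b j ≤ 1 at h1
        refine ⟨(b j - y j) / 2, ?_⟩
        omega
    choose c hc using hyb
    have hpar : ∀ i, (B *ᵥ y) i = (if i = 0 then B.det else 0) - 2 * (B *ᵥ c) i := by
      intro i
      rw [← hBb i]
      simp only [mulVec, dotProduct, Finset.mul_sum, ← Finset.sum_sub_distrib, hc]
      apply Finset.sum_congr rfl
      intro j _
      ring
    have hz : ∀ i, i ≠ 0 → (B *ᵥ y) i = 0 := by
      intro i hi
      have h1 := hpar i
      have h2 := abs_le.1 (hy3 i)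
      simp only [hi, if_false] at h1
      omega
    have hyj : y j0 = 1 ∨ y j0 = -1 := by
      have h3 : y j0 = y' (g j0) := by simp [hy, hj0]
      rw [h3]
      exact hy1 (g j0) (Finset.mem_image_of_mem _ (by simp [hJ, hj0]))
    have hbB : B *ᵥ b = fun i => if i = 0 then B.det else 0 := funext hBb
    have key : (B *ᵥ y) 0 • b - B.det • y = 0 := by
      apply hinj
      rw [mulVec_sub, mulVec_smul, mulVec_smul, hbB]
      funext i
      by_cases hi : i = 0
      · subst hi; simp; ring
      · simp [hi, hz i hi]
    have k0 := congrFun key j0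
    simp only [Pi.sub_apply, Pi.smul_apply, smul_eq_mul, Pi.zero_apply] at k0
    have e : |B.det| = |(B *ᵥ y) 0| * |b j0| := by
      rw [← abs_mul, sub_eq_zero.1 k0, abs_mul]
      rcases hyj with h | h <;> simp [h]
    rw [e]
    calc _ ≤ (1:ℤ) * 1 := mul_le_mul (hy3 0) (hadj j0 0) (abs_nonneg _) zero_le_one
      _ = 1 := one_mul 1

open Matrix in
theorem tu_integral {R n : Type*} [Fintype n] [DecidableEq n] (M : Matrix R n ℤ)
    (hM : ∀ f : n → R, |(M.submatrix f id).det| ≤ 1)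
    (hinj : ∀ v : n → ℚ, M.map (Int.cast : ℤ → ℚ) *ᵥ v = 0 → v = 0)
    (x : n → ℚ) (b : R → ℤ) (hx : ∀ r, (M.map (Int.cast : ℤ → ℚ) *ᵥ x) r = b r) :
    ∃ z : n → ℤ, ∀ j, x j = z j := by
  set Q := M.map (Int.cast : ℤ → ℚ) with hQ
  obtain ⟨κ, a, ha, hspan, hli⟩ := exists_linearIndependent' ℚ Q.row
  have htop : Submodule.span ℚ (Set.range Q.row) = ⊤ := by
    by_contra hne
    obtain ⟨φ, hφ, hφ2⟩ := Submodule.exists_le_ker_of_lt_top _ (lt_top_iff_ne_top.2 hne)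
    apply hφ
    have hv : (fun j => φ (Pi.single j 1)) = (0 : n → ℚ) := by
      apply hinj
      funext r
      have h1 : φ (Q.row r) = 0 := hφ2 (Submodule.subset_span ⟨r, rfl⟩)
      rw [pi_eq_sum_univ' (Q.row r), map_sum] at h1
      simp only [map_smul, smul_eq_mul] at h1
      simpa [mulVec, dotProduct] using h1
    apply LinearMap.pi_ext'
    intro j
    ext
    simpa using congrFun hv j
  rw [htop] at hspan
  let bas := Module.Basis.mk hli hspan.ge
  let e : n ≃ κ := (Pi.basisFun ℚ n).indexEquiv bas
  set N := M.submatrix (a ∘ e) id with hN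
  have hNQ : LinearIndependent ℚ (N.map (Int.cast : ℤ → ℚ)).row := hli.comp e e.injective
  have hu := linearIndependent_rows_iff_isUnit.1 hNQ
  have hdQ : (N.map (Int.cast : ℤ → ℚ)).det = (N.det : ℚ) := by
    rw [Int.cast_det]
  have hd0 : N.det ≠ 0 := by
    intro h0
    have := (isUnit_iff_isUnit_det _).1 hu
    rw [hdQ, h0] at this
    simp at this
  have hd1 : IsUnit N.det := by
    rw [Int.isUnit_iff]
    have := abs_le.1 (hM (a ∘ e))
    change -1 ≤ N.det ∧ N.det ≤ 1 at this
    omega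
  refine ⟨N⁻¹ *ᵥ (b ∘ a ∘ e), ?_⟩
  suffices hs : x = fun j => (((N⁻¹ *ᵥ (b ∘ a ∘ e)) j : ℤ) : ℚ) from fun j => congrFun hs j
  apply (mulVec_injective_iff_isUnit (A := N.map (Int.cast : ℤ → ℚ))).2 hu
  funext r
  have h1 : (N.map (Int.cast : ℤ → ℚ) *ᵥ x) r = b (a (e r)) := hx (a (e r))
  rw [h1]
  have h2 : N *ᵥ (N⁻¹ *ᵥ (b ∘ a ∘ e)) = b ∘ a ∘ e := by
    rw [mulVec_mulVec, mul_nonsing_inv _ hd1, one_mulVec]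
  have h3 := congrFun h2 r
  rw [Function.comp_apply, Function.comp_apply] at h3
  rw [← h3]
  rw [mulVec, dotProduct]
  push_cast
  rfl

open Matrix in
theorem tu_round {R n : Type*} [Fintype R] [Fintype n] [DecidableEq n] (M : Matrix R n ℤ)
    (hM : ∀ f : n → R, |(M.submatrix f id).det| ≤ 1)
    (row : n → R) (hrow : ∀ j, M (row j) = Pi.single j 1) (k : ℕ) :
    ∀ (x : n → ℚ), (Finset.univ.filter (fun r =>
      ¬ ((⌊(M.map (Int.cast : ℤ → ℚ) *ᵥ x) r⌋ : ℚ) = (M.map (Int.cast : ℤ → ℚ) *ᵥ x) r))).card = k →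
    ∃ z : n → ℤ, ∀ r, ⌊(M.map (Int.cast : ℤ → ℚ) *ᵥ x) r⌋ ≤ (M *ᵥ z) r ∧
      (M *ᵥ z) r ≤ ⌈(M.map (Int.cast : ℤ → ℚ) *ᵥ x) r⌉ := by
  set Q := M.map (Int.cast : ℤ → ℚ) with hQ
  induction k using Nat.strong_induction_on with
  | _ k ih =>
  intro x hk
  by_cases hint : ∃ z : n → ℤ, ∀ j, x j = z j
  · obtain ⟨z, hz⟩ := hint
    refine ⟨z, fun r => ?_⟩
    have : (Q *ᵥ x) r = ((M *ᵥ z) r : ℤ) := by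
      simp [mulVec, dotProduct, hQ, hz]
    rw [this]; simp
  let S := {r : R // (⌊(Q *ᵥ x) r⌋ : ℚ) = (Q *ᵥ x) r}
  obtain ⟨v, hv0, hv⟩ : ∃ v : n → ℚ, v ≠ 0 ∧ ∀ r, (⌊(Q *ᵥ x) r⌋ : ℚ) = (Q *ᵥ x) r → (Q *ᵥ v) r = 0 := by
    by_contra! hc
    apply hint
    apply tu_integral (M.submatrix (fun s : S => s.1) id) (fun f => hM (fun i => (f i).1)) ?_ x
      (fun s => ⌊(Q *ᵥ x) s.1⌋) (fun s => s.2.symm)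
    intro v hv
    by_contra hne
    obtain ⟨r, hr, hr2⟩ := hc v hne
    exact hr2 (congrFun hv ⟨r, hr⟩)
  have hTne : (Finset.univ.filter (fun r => (Q *ᵥ v) r ≠ 0)).Nonempty := by
    by_contra hc
    rw [Finset.not_nonempty_iff_eq_empty, Finset.filter_eq_empty_iff] at hc
    apply hv0
    funext j
    have := hc (Finset.mem_univ (row j))
    simpa [mulVec, dotProduct, hQ, hrow, Pi.single_apply] using this
  let p := fun r => (Q *ᵥ x) r
  let q := fun r => (Q *ᵥ v) r
  let t : R → ℚ := fun r => if 0 < q r then (⌈p r⌉ - p r) / q r else (⌊p r⌋ - p r) / q r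
  obtain ⟨r0, hr0, hmin⟩ := Finset.exists_min_image _ t hTne
  have hr0 : q r0 ≠ 0 := by simpa using hr0
  have ht : ∀ r, 0 ≤ t r := by
    intro r
    simp only [t]
    split_ifs with h
    · exact div_nonneg (sub_nonneg.2 (Int.le_ceil _)) h.le
    · exact div_nonneg_of_nonpos (sub_nonpos.2 (Int.floor_le _)) (not_lt.1 h)
  set x' := x + t r0 • v with hx'
  have hp' : ∀ r, (Q *ᵥ x') r = p r + t r0 * q r := by
    intro r
    rw [hx', mulVec_add, mulVec_smul]; rfl
  have hbd : ∀ r, (⌊p r⌋ : ℚ) ≤ (Q *ᵥ x') r ∧ (Q *ᵥ x') r ≤ ⌈p r⌉ := by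
    intro r
    rw [hp']
    have h1 := Int.floor_le (p r)
    have h2 := Int.le_ceil (p r)
    rcases lt_trichotomy (q r) 0 with h | h | h
    · have h3 := hmin r (by simpa using h.ne)
      have h4 : t r * q r = ⌊p r⌋ - p r := by
        simp only [t, if_neg h.not_gt]; field_simp [h.ne]
      have h5 := mul_le_mul_of_nonpos_right h3 h.le
      have h6 := mul_nonpos_of_nonneg_of_nonpos (ht r0) h.le
      constructor <;> linarith
    · rw [h]; constructor <;> linarith
    · have h3 := hmin r (by simpa using h.ne')
      have h4 : t r * q r = ⌈p r⌉ - p r := by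
        simp only [t, if_pos h]; field_simp [h.ne']
      have h5 := mul_le_mul_of_nonneg_right h3 h.le
      have h6 := mul_nonneg (ht r0) h.le
      constructor <;> linarith
  have hnew : (⌊(Q *ᵥ x') r0⌋ : ℚ) = (Q *ᵥ x') r0 := by
    rw [hp']
    by_cases h : 0 < q r0
    · have h4 : t r0 * q r0 = ⌈p r0⌉ - p r0 := by
        simp only [t, if_pos h]; field_simp [h.ne']
      rw [h4]; simp
    · have h4 : t r0 * q r0 = ⌊p r0⌋ - p r0 := by
        simp only [t, if_neg h]; field_simp [hr0]
      rw [h4]; simp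
  obtain ⟨z, hz⟩ := ih _ (by
    rw [← hk]
    apply Finset.card_lt_card
    refine Finset.ssubset_iff_of_subset ?_ |>.2 ⟨r0, ?_, ?_⟩
    · intro r hr
      simp only [Finset.mem_filter, Finset.mem_univ, true_and] at hr ⊢
      intro hc
      apply hr
      have : q r = 0 := hv r hc
      rw [hp', this, mul_zero, add_zero]
      exact hc
    · simp only [Finset.mem_filter, Finset.mem_univ, true_and]
      intro hc
      exact hr0 (hv r0 hc)
    · simp only [Finset.mem_filter, Finset.mem_univ, true_and, not_not]
      exact hnew) x' rfl
  refine ⟨z, fun r => ⟨le_trans (Int.le_floor.2 (hbd r).1) (hz r).1,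
    le_trans (hz r).2 (Int.ceil_le.2 (hbd r).2)⟩⟩

open Matrix in
theorem tu_split_fin {R n : Type*} [Fintype R] [Fintype n] [DecidableEq n] (A : Matrix R n ℤ)
    (hA : (A.map (Int.cast : ℤ → ℚ)).IsTotallyUnimodular) :
    ∃ z : n → ℤ, (∀ j, z j = 0 ∨ z j = 1) ∧ ∀ i, |∑ j, A i j * (2 * z j - 1)| ≤ 1 := by
  have hB := (fromRows_one_isTotallyUnimodular_iff _).2 hA
  set M : Matrix (R ⊕ n) n ℤ := fromRows A 1 with hMdef
  have hMQ : fromRows (A.map (Int.cast : ℤ → ℚ)) (1 : Matrix n n ℚ)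
      = M.map (Int.cast : ℤ → ℚ) := by
    ext (i | i) j
    · simp [hMdef]
    · simp [hMdef, one_apply]
  rw [hMQ] at hB
  have hM : ∀ f : n → R ⊕ n, |(M.submatrix f id).det| ≤ 1 := by
    intro f
    have h := (isTotallyUnimodular_iff_fintype _).1 hB n f id
    obtain ⟨s, hs⟩ := h
    rw [submatrix_map, ← Int.cast_det] at hs
    have h2 : (M.submatrix f id).det = (s : ℤ) := by
      have : ((s : ℤ) : ℚ) = (s : ℚ) := by cases s <;> simp
      exact_mod_cast hs.symm.trans this.symm
    rw [h2]
    cases s <;> simp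
  obtain ⟨z, hz⟩ := tu_round M hM Sum.inr (fun j => by
    funext i; simp [hMdef, one_apply, Pi.single_apply, eq_comm]) _ (fun _ => 1/2) rfl
  refine ⟨z, fun j => ?_, fun i => ?_⟩
  · have h := hz (Sum.inr j)
    have e1 : (M *ᵥ z) (Sum.inr j) = z j := by
      simp [hMdef]
    have e2 : (M.map (Int.cast : ℤ → ℚ) *ᵥ fun _ => 1/2) (Sum.inr j) = 1/2 := by
      rw [← hMQ]; simp
    rw [e1, e2] at h
    norm_num at h
    omega
  · have h := hz (Sum.inl i)
    have e1 : (M *ᵥ z) (Sum.inl i) = ∑ j, A i j * z j := by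
      simp [hMdef, mulVec, dotProduct]
    have e2 : (M.map (Int.cast : ℤ → ℚ) *ᵥ fun _ => 1/2) (Sum.inl i) = ((∑ j, A i j : ℤ) : ℚ)/2 := by
      rw [← hMQ]; simp [mulVec, dotProduct, Finset.sum_div, div_eq_mul_inv, Finset.sum_mul]
    rw [e1, e2] at h
    have e3 : ∑ j, A i j * (2 * z j - 1) = 2 * ∑ j, A i j * z j - ∑ j, A i j := by
      rw [Finset.mul_sum, ← Finset.sum_sub_distrib]
      apply Finset.sum_congr rfl
      intros; ring
    rw [e3]
    generalize ∑ j, A i j * z j = a at *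
    generalize ∑ j, A i j = s at *
    obtain ⟨h1, h2⟩ := h
    have h1' : ((s:ℚ)/2) < a + 1 := by
      have := Int.floor_lt.1 (show ⌊(s:ℚ)/2⌋ < a + 1 by omega)
      push_cast at this; exact this
    have h2' : (a:ℚ) - 1 < (s:ℚ)/2 := by
      have := Int.lt_ceil.1 (show a - 1 < ⌈(s:ℚ)/2⌉ by omega)
      push_cast at this; exact this
    have h3 : s < 2 * (a + 1) := by
      have : (s:ℚ) < 2 * (a+1) := by linarith
      exact_mod_cast this
    have h4 : 2 * (a - 1) < s := by
      have : 2 * ((a:ℚ)-1) < s := by linarith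
      exact_mod_cast this
    rw [abs_le]; constructor <;> omega

/-- Schrijver, Theorem 19.3, column version. A matrix `A` with entries in
`{-1, 0, 1}` is totally unimodular if and only if every collection `J` of columns of `A` can
be split into two parts `J₁` and `J₂` such that the sum of the columns in `J₁` minus the sum
of the columns in `J₂` is a vector all of whose entries equal `0`, `1`, or `-1`. -/
theorem totallyUnimodular_iff_column_split {m n : Type*} [DecidableEq n] (A : Matrix m n ℚ)
    (hA : ∀ i j, A i j = -1 ∨ A i j = 0 ∨ A i j = 1) :
    A.IsTotallyUnimodular ↔
      ∀ J : Finset n, ∃ J₁ J₂ : Finset n, J₁ ∪ J₂ = J ∧ Disjoint J₁ J₂ ∧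
        ∀ i : m, (∑ j ∈ J₁, A i j) - (∑ j ∈ J₂, A i j) = -1 ∨
                 (∑ j ∈ J₁, A i j) - (∑ j ∈ J₂, A i j) = 0 ∨
                 (∑ j ∈ J₁, A i j) - (∑ j ∈ J₂, A i j) = 1 := by
  classical
  have hA2 : ∀ i j, ∃ a : ℤ, A i j = a ∧ |a| ≤ 1 := by
    intro i j
    rcases hA i j with h | h | h
    · exact ⟨-1, by simp [h]⟩
    · exact ⟨0, by simp [h]⟩
    · exact ⟨1, by simp [h]⟩
  choose Z hZ hZ1 using hA2
  have hAZ : A = (Matrix.of Z).map (Int.cast : ℤ → ℚ) := by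
    ext i j; simp [hZ]
  have sumZ : ∀ i (J₁ J₂ : Finset n), (∑ j ∈ J₁, A i j) - (∑ j ∈ J₂, A i j)
      = ((∑ j ∈ J₁, Z i j - ∑ j ∈ J₂, Z i j : ℤ) : ℚ) := by
    intro i J₁ J₂; push_cast; simp [hZ]
  have tri : ∀ a : ℤ, ((a:ℚ) = -1 ∨ (a:ℚ) = 0 ∨ (a:ℚ) = 1) ↔ |a| ≤ 1 := by
    intro a
    have : ((a:ℚ) = -1 ∨ (a:ℚ) = 0 ∨ (a:ℚ) = 1) ↔ (a = -1 ∨ a = 0 ∨ a = 1) := by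
      norm_cast
    rw [this, abs_le]; omega
  simp only [sumZ, tri]
  constructor
  · intro hT J
    let F : m → (J → ℤ) := fun i j => Z i j
    have hfin : (Set.range F).Finite := by
      apply (Set.finite_Icc (fun _ : J => (-1:ℤ)) (fun _ => 1)).subset
      rintro _ ⟨i, rfl⟩
      exact ⟨fun j => (abs_le.1 (hZ1 i j)).1, fun j => (abs_le.1 (hZ1 i j)).2⟩
    have := hfin.fintype
    let rep : Set.range F → m := fun r => r.2.choose
    have hrep : ∀ r, F (rep r) = r.1 := fun r => r.2.choose_spec
    obtain ⟨z, hz0, hz⟩ := tu_split_fin ((Matrix.of Z).submatrix rep (fun j : J => j.1)) (by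
      have := hT.submatrix rep (fun j : J => j.1)
      rw [hAZ] at this
      exact this)
    have hzi : ∀ i, |∑ j : J, Z i j * (2 * z j - 1)| ≤ 1 := by
      intro i
      have h1 := hz ⟨F i, i, rfl⟩
      have h2 := hrep ⟨F i, i, rfl⟩
      convert h1 using 4 with j
      exact (congrFun h2 j).symm
    let y : n → ℤ := fun j => if h : j ∈ J then z ⟨j, h⟩ else 0
    have hy : ∀ j : J, y j = z j := fun j => by simp [y]
    refine ⟨J.filter (fun j => y j = 1), J.filter (fun j => ¬ y j = 1),
      Finset.filter_union_filter_not_eq _ _, Finset.disjoint_filter_filter_not _ _ _, fun i => ?_⟩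
    convert hzi i using 2
    rw [Finset.sum_filter, Finset.sum_filter, ← Finset.sum_sub_distrib, ← Finset.sum_coe_sort]
    apply Finset.sum_congr rfl
    intro j _
    rw [hy]
    rcases hz0 j with h | h <;> simp [h]
  · intro h k f g hf hg
    have key := gh_det (Matrix.of Z) (by
      intro J
      obtain ⟨J₁, J₂, hJ, hd, hs⟩ := h J
      refine ⟨fun j => if j ∈ J₁ then 1 else -1, fun j _ => by by_cases h : j ∈ J₁ <;> simp [h],
        fun i => ?_⟩
      convert hs i using 2
      rw [← hJ, Finset.sum_union hd, sub_eq_add_neg, ← Finset.sum_neg_distrib]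
      congr 1
      · exact Finset.sum_congr rfl fun j hj => by simp [hj]
      · exact Finset.sum_congr rfl fun j hj => by simp [Finset.disjoint_right.1 hd hj]) k f g hg
    rw [hAZ, Matrix.submatrix_map, ← Int.cast_det]
    rcases (tri _).2 key with h | h | h
    · exact ⟨-1, by simp [h]⟩
    · exact ⟨0, by simp [h]⟩
    · exact ⟨1, by simp [h]⟩
end

section
/- The constraint matrix A of the linear program (OP) (for a single time period, with constraint (1) replaced by its halved form (1')) is totally unimodular. Precisely: let the rows of A be indexed by the disjoint union S ⊔ N ⊔ N ⊔ S ⊔ (N × N) (corresponding to constraint families (1'), (2), (3), (4), (5)) and the columns by the disjoint union Nb ⊔ Nb ⊔ (N × N) (corresponding to variables F^+_{s,n} for (s,n) ∈ Nb, F^-_{s,n} for (s,n) ∈ Nb, and E_{n,n'}), with entries: a row of type (1') indexed by s has entry 1 in each F^+ column (s,n) with (s,n) ∈ Nb and 0 elsewhere; a row of type (2) indexed by n has entry 1 in each F^+ column (s,n) with (s,n) ∈ Nb, entry 1 in each E column (n'', n) for n'' ∈ N, and 0 elsewhere; a row of type (3) indexed by n has entry 1 in each F^- column (s,n) with (s,n)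 ∈ Nb, entry 1 in each E column (n, n'') for n'' ∈ N, and 0 elsewhere; a row of type (4) indexed by s has entry 1 in each F^+ column (s,n) with (s,n) ∈ Nb, entry −1 in each F^- column (s,n) with (s,n) ∈ Nb, and 0 elsewhere; a row of type (5) indexed by (n,n') has entry 1 in the E column (n,n') and 0 elsewhere. Then A is totally unimodular. -/
/-- The single-time-period constraint matrix `A` of (OP), with the capacity constraint (1)
replaced by its halved form (1').  Rows are indexed by `S ⊕ N ⊕ N ⊕ S ⊕ (N × N)`
(constraint families (1'), (2), (3), (4), (5)); columns are indexed by
`Nb ⊕ Nb ⊕ (N × N)` (variables `F⁺_{s,n}`, `F⁻_{s,n}` for `(s,n) ∈ Nb`, and `E_{n,n'}`). -/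
def OPConstraintMatrix {N S : Type*} [DecidableEq N] [DecidableEq S]
    (Nb : S → N → Prop) :
    Matrix (S ⊕ N ⊕ N ⊕ S ⊕ N × N)
      ({p : S × N // Nb p.1 p.2} ⊕ {p : S × N // Nb p.1 p.2} ⊕ N × N) ℚ :=
  fun r c =>
    match r, c with
    -- (1') rows: 1 on the F⁺ columns of station s
    | Sum.inl s, Sum.inl ⟨(s', _), _⟩ => if s' = s then 1 else 0
    | Sum.inl _, _ => 0
    -- (2) rows: 1 on the F⁺ columns of node n and on the E columns (·, n)
    | Sum.inr (Sum.inl n), Sum.inl ⟨(_, n'), _⟩ => if n' = n then 1 else 0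
    | Sum.inr (Sum.inl n), Sum.inr (Sum.inr (_, n')) => if n' = n then 1 else 0
    | Sum.inr (Sum.inl _), _ => 0
    -- (3) rows: 1 on the F⁻ columns of node n and on the E columns (n, ·)
    | Sum.inr (Sum.inr (Sum.inl n)), Sum.inr (Sum.inl ⟨(_, n'), _⟩) =>
        if n' = n then 1 else 0
    | Sum.inr (Sum.inr (Sum.inl n)), Sum.inr (Sum.inr (n', _)) => if n' = n then 1 else 0
    | Sum.inr (Sum.inr (Sum.inl _)), _ => 0
    -- (4) rows: 1 on the F⁺ columns of station s, -1 on the F⁻ columns of station s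
    | Sum.inr (Sum.inr (Sum.inr (Sum.inl s))), Sum.inl ⟨(s', _), _⟩ =>
        if s' = s then 1 else 0
    | Sum.inr (Sum.inr (Sum.inr (Sum.inl s))), Sum.inr (Sum.inl ⟨(s', _), _⟩) =>
        if s' = s then -1 else 0
    | Sum.inr (Sum.inr (Sum.inr (Sum.inl _))), _ => 0
    -- (5) rows: 1 on the E column (n, n')
    | Sum.inr (Sum.inr (Sum.inr (Sum.inr p))), Sum.inr (Sum.inr p') =>
        if p' = p then 1 else 0
    | Sum.inr (Sum.inr (Sum.inr (Sum.inr _))), _ => 0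

lemma op_incidence_det : ∀ (k : ℕ) (M : Matrix (Fin k) (Fin k) ℚ) (e : Fin k → ℚ)
    (_ : ∀ i, e i ≠ 0)
    (_ : ∀ i j, M i j ∈ Set.range (SignType.cast : SignType → ℚ))
    (_ : ∀ j i i', M i j ≠ 0 → M i' j ≠ 0 → i ≠ i' → e i * M i j + e i' * M i' j = 0),
    M.det ∈ Set.range (SignType.cast : SignType → ℚ) := by
  intro k
  induction k with
  | zero => intro M e _ _ _; exact ⟨1, by simp⟩
  | succ k ih =>
    intro M e he hM hc
    by_cases h : ∃ j i, ∀ i', i' ≠ i → M i' j = 0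
    · obtain ⟨j, i, hij⟩ := h
      rw [Matrix.det_succ_column M j, Fintype.sum_eq_single i
        (fun y hy => by rw [hij y hy]; simp)]
      change _ ∈ MonoidHom.mrange SignType.castHom.toMonoidHom
      refine mul_mem (mul_mem ?_ (hM i j)) ?_
      · apply pow_mem
        exact ⟨-1, by simp⟩
      · refine ih _ (fun x => e (i.succAbove x)) (fun x => he _) (fun x y => hM _ _) ?_
        intro y x x' h1 h2 h3
        exact hc _ _ _ h1 h2 (fun h => h3 (Fin.succAbove_right_injective h))
    · push Not at h
      refine ⟨0, ?_⟩
      rw [SignType.coe_zero, eq_comm]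
      rw [← Matrix.exists_vecMul_eq_zero_iff]
      refine ⟨e, fun h0 => he 0 (congrFun h0 0), ?_⟩
      ext j
      obtain ⟨a, -, ha⟩ := h j 0
      obtain ⟨b, hba, hb⟩ := h j a
      simp only [Matrix.vecMul, dotProduct, Pi.zero_apply]
      rw [Fintype.sum_eq_add a b hba.symm]
      · exact hc j a b ha hb hba.symm
      · rintro c ⟨hca, hcb⟩
        by_contra hne
        have hcc : M c j ≠ 0 := fun h => hne (by rw [h, mul_zero])
        have h1 := hc j a b ha hb hba.symm
        have h2 := hc j c a hcc ha hca
        have h3 := hc j c b hcc hb hcb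
        exact hne (by linarith)

lemma op_rowop_det {k : ℕ} (M : Matrix (Fin k) (Fin k) ℚ) (p : Fin k → Fin k)
    (T : Finset (Fin k)) : (∀ i ∈ T, p i ∉ T) →
    Matrix.det (fun i j => if i ∈ T then M i j - M (p i) j else M i j) = M.det := by
  induction T using Finset.induction_on with
  | empty => intro _; simp
  | insert a T ha ih =>
    intro h
    have hpa := h a (Finset.mem_insert_self _ _)
    rw [Finset.mem_insert, not_or] at hpa
    rw [← ih (fun i hi hp => h i (Finset.mem_insert_of_mem hi) (Finset.mem_insert_of_mem hp))]
    rw [← Matrix.det_updateRow_add_smul_self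
      (fun i j => if i ∈ T then M i j - M (p i) j else M i j) (Ne.symm hpa.1) (-1 : ℚ)]
    congr 1
    ext i j
    by_cases hia : i = a
    · subst hia
      refine Eq.trans ?_ (Matrix.updateRow_apply ..).symm
      rw [if_pos rfl]
      simp [ha, hpa.2, sub_eq_add_neg]
    · refine Eq.trans ?_ (Matrix.updateRow_apply ..).symm
      rw [if_neg hia]
      simp [hia]

/-- Embedding of the rows of types (1')-(4). -/
def opEmb (N S : Type*) : S ⊕ N ⊕ N ⊕ S → S ⊕ N ⊕ N ⊕ S ⊕ N × N
  | .inl s => .inl s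
  | .inr (.inl n) => .inr (.inl n)
  | .inr (.inr (.inl n)) => .inr (.inr (.inl n))
  | .inr (.inr (.inr s)) => .inr (.inr (.inr (.inl s)))

/-- Splitting off the rows of type (5). -/
def opSplit (N S : Type*) : S ⊕ N ⊕ N ⊕ S ⊕ N × N → (S ⊕ N ⊕ N ⊕ S) ⊕ N × N
  | .inl s => .inl (.inl s)
  | .inr (.inl n) => .inl (.inr (.inl n))
  | .inr (.inr (.inl n)) => .inl (.inr (.inr (.inl n)))
  | .inr (.inr (.inr (.inl s))) => .inl (.inr (.inr (.inr s)))
  | .inr (.inr (.inr (.inr p))) => .inr p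

/-- Row signs. -/
def opSign (N S : Type*) : S ⊕ N ⊕ N ⊕ S → ℚ
  | .inl _ => -1
  | .inr (.inl _) => 1
  | .inr (.inr (.inl _)) => -1
  | .inr (.inr (.inr _)) => -1

/-- The matrix after the row operations. -/
def opMod {N S : Type*} [DecidableEq N] [DecidableEq S] (Nb : S → N → Prop)
    (P : S → Prop) [DecidablePred P] :
    Matrix (S ⊕ N ⊕ N ⊕ S) ({p : S × N // Nb p.1 p.2} ⊕ {p : S × N // Nb p.1 p.2} ⊕ N × N) ℚ :=
  fun r c => match r with
    | .inr (.inr (.inr s)) => if P s then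
        OPConstraintMatrix Nb (.inr (.inr (.inr (.inl s)))) c - OPConstraintMatrix Nb (.inl s) c
        else OPConstraintMatrix Nb (.inr (.inr (.inr (.inl s)))) c
    | r => OPConstraintMatrix Nb (opEmb N S r) c

lemma opMod_range {N S : Type*} [DecidableEq N] [DecidableEq S] (Nb : S → N → Prop)
    (P : S → Prop) [DecidablePred P] (r c) :
    opMod Nb P r c ∈ Set.range (SignType.cast : SignType → ℚ) := by
  have h0 : (0 : ℚ) ∈ Set.range (SignType.cast : SignType → ℚ) := ⟨0, by simp⟩
  have h1 : (1 : ℚ) ∈ Set.range (SignType.cast : SignType → ℚ) := ⟨1, by simp⟩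
  have h2 : (-1 : ℚ) ∈ Set.range (SignType.cast : SignType → ℚ) := ⟨-1, by simp⟩
  rcases r with s | n | n | s <;> rcases c with ⟨⟨s', n'⟩, hc⟩ | ⟨⟨s', n'⟩, hc⟩ | ⟨n', n''⟩ <;>
    simp only [opMod, opEmb, OPConstraintMatrix] <;> (try split_ifs) <;>
    (try simp only [sub_self, sub_zero]) <;> assumption

lemma opMod_cancel {N S : Type*} [DecidableEq N] [DecidableEq S] (Nb : S → N → Prop)
    (P : S → Prop) [DecidablePred P] (r r' c) (hr : ∀ s, r = .inl s → P s)
    (hr' : ∀ s, r' = .inl s → P s) (h : opMod Nb P r c ≠ 0) (h' : opMod Nb P r' c ≠ 0)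
    (hne : r ≠ r') :
    opSign N S r * opMod Nb P r c + opSign N S r' * opMod Nb P r' c = 0 := by
  rcases c with ⟨⟨s₁, n₁⟩, hc⟩ | ⟨⟨s₁, n₁⟩, hc⟩ | ⟨n₁, n₂⟩ <;>
  rcases r with s | n | n | s <;> rcases r' with s' | n' | n' | s' <;>
    simp only [opMod, opEmb, opSign, OPConstraintMatrix] at h h' ⊢ <;>
    (try split_ifs at h h' ⊢) <;>
    simp_all

lemma op_core {N S : Type*} [DecidableEq N] [DecidableEq S] (Nb : S → N → Prop) :
    ((OPConstraintMatrix Nb).submatrix (opEmb N S) id).IsTotallyUnimodular := by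
  classical
  intro k f g hf hg
  let P : S → Prop := fun s => ∃ i, f i = .inl s
  let T : Finset (Fin k) := Finset.univ.filter fun i => ∃ s, f i = .inr (.inr (.inr s)) ∧ P s
  have hp : ∀ i, ∃ i', ∀ s, f i = .inr (.inr (.inr s)) → P s → f i' = .inl s := by
    intro i
    by_cases h : ∃ s, f i = .inr (.inr (.inr s)) ∧ P s
    · obtain ⟨s, hs, i', hi'⟩ := h
      refine ⟨i', fun s' hs' _ => ?_⟩
      rw [hs] at hs'
      simp only [Sum.inr.injEq] at hs'
      rw [hi', hs']
    · exact ⟨i, fun s h1 h2 => (h ⟨s, h1, h2⟩).elim⟩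
  choose p hp using hp
  rw [← op_rowop_det _ p T]
  · have : (fun i j => if i ∈ T then
        (((OPConstraintMatrix Nb).submatrix (opEmb N S) id).submatrix f g) i j -
        (((OPConstraintMatrix Nb).submatrix (opEmb N S) id).submatrix f g) (p i) j
        else (((OPConstraintMatrix Nb).submatrix (opEmb N S) id).submatrix f g) i j) =
        (opMod Nb P).submatrix f g := by
      ext i j
      have hpi := hp i
      rcases hfi : f i with s | n | n | s
      · simp [T, hfi, opMod]
      · simp [T, hfi, opMod]
      · simp [T, hfi, opMod]
      · by_cases hP : P s
        · have := hpi s hfi hP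
          simp [T, hfi, opMod, hP, this, opEmb]
        · simp [T, hfi, opMod, hP, opEmb]
    rw [this]
    refine op_incidence_det k _ (fun i => opSign N S (f i)) ?_ (fun i j => opMod_range _ _ _ _) ?_
    · intro i
      rcases f i with s | n | n | s <;> simp [opSign]
    · intro j i i' h h' hne
      exact opMod_cancel Nb P _ _ _ (fun s hs => ⟨i, hs⟩) (fun s hs => ⟨i', hs⟩) h h'
        (fun h => hne (hf h))
  · intro i hi hpT
    simp only [T, Finset.mem_filter, Finset.mem_univ, true_and] at hi hpT
    obtain ⟨s, hs, hP⟩ := hi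
    obtain ⟨s', hs', -⟩ := hpT
    rw [hp i s hs hP] at hs'
    cases hs'

/-- part of the proof of Property 1. The constraint matrix of (OP) for a
single time period, with constraint (1) replaced by its halved form (1'), is totally
unimodular. -/
theorem OPConstraintMatrix_isTotallyUnimodular {N S : Type*} [DecidableEq N] [DecidableEq S]
    (Nb : S → N → Prop) :
    (OPConstraintMatrix Nb).IsTotallyUnimodular := by
  classical
  have h := (op_core Nb).fromRows_unitlike
    (B := fun (p : N × N) c => OPConstraintMatrix Nb (.inr (.inr (.inr (.inr p)))) c) (by
      intro _ p
      refine ⟨.inr (.inr p), 1, ?_⟩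
      ext c
      rcases c with ⟨⟨s', n'⟩, hc⟩ | ⟨⟨s', n'⟩, hc⟩ | q <;>
        simp [OPConstraintMatrix, Pi.single_apply])
  convert h.submatrix (opSplit N S) id using 1
  ext r c
  rcases r with s | n | n | s | q <;> rfl
end

section
/- In the two-node, three-station, single-period instance with constraint (5) included, the minimum of Σ_{n,n'} E_{n,n'} over all feasible solutions equals 10. -/
open Finset

/-- Neighbourhood relation of the two-node, three-station example:
`Nb = {(s₁,n₁), (s₂,n₂), (s₃,n₂)}`. -/
def exNb (s : Fin 3) (n : Fin 2) : Prop :=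
  (s = 0 ∧ n = 0) ∨ (s = 1 ∧ n = 1) ∨ (s = 2 ∧ n = 1)

instance : ∀ s n, Decidable (exNb s n) := fun s n => by unfold exNb; infer_instance

/-- Origin–destination matrix of the example: 10 trips each way between the two nodes. -/
def exOD (n n' : Fin 2) : ℝ := if n = n' then 0 else 10

/-- In the two-node, three-station, single-period instance with
constraint (5) included, the minimum of `∑ n n', E n n'` over all feasible
solutions equals `10`. -/
theorem example_with_constraint5_min_is_ten :
    IsLeast
      { x : ℝ | ∃ (Fp Fm : Fin 3 → Fin 2 → ℝ) (E : Fin 2 → Fin 2 → ℝ),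
        (∀ s n, 0 ≤ Fp s n) ∧ (∀ s n, 0 ≤ Fm s n) ∧ (∀ n n', 0 ≤ E n n') ∧
        (∀ s n, ¬ exNb s n → Fp s n = 0) ∧ (∀ s n, ¬ exNb s n → Fm s n = 0) ∧
        -- (1) station capacity, v = 10, z_s = 1
        (∀ s, ∑ n ∈ univ.filter (fun n => exNb s n), (Fp s n + Fm s n) ≤ 10 * 1) ∧
        -- (2) inward flow
        (∀ n, ∑ s ∈ univ.filter (fun s => exNb s n), Fp s n + ∑ n', E n' n
            = ∑ n', exOD n' n) ∧
        -- (3) outward flow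
        (∀ n, ∑ s ∈ univ.filter (fun s => exNb s n), Fm s n + ∑ n', E n n'
            = ∑ n', exOD n n') ∧
        -- (4) zero net flow
        (∀ s, ∑ n ∈ univ.filter (fun n => exNb s n), (Fp s n - Fm s n) = 0) ∧
        -- (5) unsatisfied trips correspond to actual trips
        (∀ n n', E n n' ≤ exOD n n') ∧
        x = ∑ n, ∑ n', E n n' } 10 := by
  constructor
  · refine ⟨fun s n => if exNb s n then (if s = 0 then 5 else 5/2) else 0,
      fun s n => if exNb s n then (if s = 0 then 5 else 5/2) else 0,
      fun n n' => if n = n' then 0 else 5, ?_, ?_, ?_, ?_, ?_, ?_, ?_, ?_, ?_, ?_, ?_⟩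
    · intro s n; dsimp only; split_ifs <;> norm_num
    · intro s n; dsimp only; split_ifs <;> norm_num
    · intro s n; dsimp only; split_ifs <;> norm_num
    · intro s n h; simp [h]
    · intro s n h; simp [h]
    · intro s; fin_cases s <;> simp [Finset.sum_filter, Fin.sum_univ_succ, exNb] <;> norm_num
    · intro n; fin_cases n <;> simp [Finset.sum_filter, Fin.sum_univ_succ, exNb, exOD] <;> norm_num
    · intro n; fin_cases n <;> simp [Finset.sum_filter, Fin.sum_univ_succ, exNb, exOD] <;> norm_num
    · intro s; simp
    · intro n n'; simp only [exOD]; split_ifs <;> norm_num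
    · simp [Fin.sum_univ_succ]; norm_num
  · rintro x ⟨Fp, Fm, E, hp, hm, hE, -, -, h1, h2, h3, h4, h5, rfl⟩
    have a1 := h1 0
    have a2 := h2 0
    have a3 := h3 0
    have e0 := h5 0 0
    have e1 := hE 1 1
    simp [Finset.sum_filter, Fin.sum_univ_two, Fin.sum_univ_three, exNb, exOD] at a1 a2 a3 e0 ⊢
    linarith [hE 0 0]
end

section
/- In the two-node, three-station, single-period instance with constraint (5) omitted, the minimum of Σ_{n,n'} E_{n,n'} over all feasible solutions equals 5 (strictly less than the optimal value 10 obtained when (5) is enforced), showing constraint (5) is necessary for trip integrity. -/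
open Finset

/-- In the two-node, three-station, single-period instance with
constraint (5) omitted, the minimum of `∑ n n', E n n'` over all feasible solutions
equals `5`, strictly less than the optimal value `10` obtained when (5) is enforced;
this shows constraint (5) is necessary for trip integrity. -/
theorem example_without_constraint5_min_is_five :
    IsLeast
      { x : ℝ | ∃ (Fp Fm : Fin 3 → Fin 2 → ℝ) (E : Fin 2 → Fin 2 → ℝ),
        (∀ s n, 0 ≤ Fp s n) ∧ (∀ s n, 0 ≤ Fm s n) ∧ (∀ n n', 0 ≤ E n n') ∧
        (∀ s n, ¬ exNb s n → Fp s n = 0) ∧ (∀ s n, ¬ exNb s n → Fm s n = 0) ∧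
        -- (1) station capacity, v = 10, z_s = 1
        (∀ s, ∑ n ∈ univ.filter (fun n => exNb s n), (Fp s n + Fm s n) ≤ 10 * 1) ∧
        -- (2) inward flow
        (∀ n, ∑ s ∈ univ.filter (fun s => exNb s n), Fp s n + ∑ n', E n' n
            = ∑ n', exOD n' n) ∧
        -- (3) outward flow
        (∀ n, ∑ s ∈ univ.filter (fun s => exNb s n), Fm s n + ∑ n', E n n'
            = ∑ n', exOD n n') ∧
        -- (4) zero net flow
        (∀ s, ∑ n ∈ univ.filter (fun n => exNb s n), (Fp s n - Fm s n) = 0) ∧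
        x = ∑ n, ∑ n', E n n' } 5
    ∧ (5 : ℝ) < 10 := by
  have h02 : ¬ (0 : Fin 3) = 2 := by decide
  have h20 : ¬ (2 : Fin 3) = 0 := by decide
  have h22 : (⟨2, by norm_num⟩ : Fin 3) = 2 := rfl
  refine ⟨⟨?_, ?_⟩, by norm_num⟩
  · refine ⟨fun s n => if exNb s n then 5 else 0, fun s n => if exNb s n then 5 else 0,
      fun n n' => if n = 0 ∧ n' = 0 then 5 else 0, ?_, ?_, ?_, ?_, ?_, ?_, ?_, ?_, ?_, ?_⟩
    · intro s n; dsimp only; split_ifs <;> norm_num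
    · intro s n; dsimp only; split_ifs <;> norm_num
    · intro s n; dsimp only; split_ifs <;> norm_num
    · intro s n h; simp [h]
    · intro s n h; simp [h]
    · intro s; fin_cases s <;> norm_num [h02, h20, h22, Finset.sum_filter, Fin.sum_univ_succ, exNb]
    · intro n; fin_cases n <;> norm_num [h02, h20, h22, Finset.sum_filter, Fin.sum_univ_succ, exNb, exOD]
    · intro n; fin_cases n <;> norm_num [h02, h20, h22, Finset.sum_filter, Fin.sum_univ_succ, exNb, exOD]
    · intro s; fin_cases s <;> norm_num [h02, h20, h22, Finset.sum_filter, Fin.sum_univ_succ, exNb]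
    · norm_num [Fin.sum_univ_succ]
  · rintro x ⟨Fp, Fm, E, -, -, hE, -, -, h1, h2, -, h4, rfl⟩
    have a := h1 0
    have b := h2 0
    have c := h4 0
    simp [Finset.sum_filter, Fin.sum_univ_succ, exNb, exOD] at a b c
    have e1 := hE 0 1
    have e2 := hE 1 1
    simp only [Fin.sum_univ_two]
    linarith
end

section
/- The minimal feasible dual capacity variable for a station with neighborhood M equals max(0, max_{n,n'∈M} −(P_n + G_{n'})/2). Precisely: for a finite nonempty set M and functions P, G : M → ℝ, the minimum of U over all pairs (U, R) ∈ ℝ_{≥0} × ℝ satisfying U + P_n + R ≥ 0 and U + G_{n'} − R ≥ 0 for all n, n' ∈ M equals max(0, max_{n,n'∈M} −(P_n + G_{n'})/2). -/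
/-- The minimal feasible dual capacity variable for a station with
neighbourhood `M` equals `max 0 (max_{n,n'∈M} -(P n + G n')/2)`: the minimum of `U` over all
pairs `(U, R) ∈ ℝ≥0 × ℝ` satisfying the dual feasibility constraints
`U + P n + R ≥ 0` and `U + G n' - R ≥ 0` for all `n, n' ∈ M` is
`max 0 (max_{n,n'} -(P n + G n')/2)`. -/
theorem minimal_dual_capacity_variable {M : Type*} [Fintype M] [Nonempty M]
    (P G : M → ℝ) :
    IsLeast
      { u : ℝ | 0 ≤ u ∧ ∃ R : ℝ, ∀ n n' : M, 0 ≤ u + P n + R ∧ 0 ≤ u + G n' - R }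
      (max 0 (Finset.univ.sup' Finset.univ_nonempty
        (fun p : M × M => -(P p.1 + G p.2) / 2))) := by
  obtain ⟨a, ha⟩ := Finite.exists_min P
  obtain ⟨b, hb⟩ := Finite.exists_min G
  constructor
  · refine ⟨le_max_left _ _, (G b - P a) / 2, fun n n' => ?_⟩
    have h := (Finset.le_sup' (fun p : M × M => -(P p.1 + G p.2) / 2)
      (Finset.mem_univ (a, b))).trans (le_max_right 0 _)
    have h1 := ha n
    have h2 := hb n'
    dsimp only at h
    constructor <;> linarith
  · rintro u ⟨hu, R, hR⟩
    refine max_le hu (Finset.sup'_le _ _ fun p _ => ?_)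
    have h := hR p.1 p.2
    linarith [h.1, h.2]
end

section
/- A finite set of points in the plane whose pairwise ℓ₁ distances are at most 2w admits a common station location within walking distance w of all of them: if x₁, …, x_k ∈ ℝ² satisfy ‖x_i − x_j‖₁ ≤ 2w for all i, j, then there exists s ∈ ℝ² with ‖s − x_i‖₁ ≤ w for all i. -/
/-- The ℓ₁ distance between two points of the plane. -/
def l1dist (p q : ℝ × ℝ) : ℝ := |p.1 - q.1| + |p.2 - q.2|

lemma exists_center (w : ℝ) (k : ℕ) (f : Fin k → ℝ)
    (hf : ∀ i j, f i - f j ≤ 2 * w) : ∃ c : ℝ, ∀ i, c - f i ≤ w ∧ f i - c ≤ w := by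
  rcases isEmpty_or_nonempty (Fin k) with h | h
  · exact ⟨0, fun i => (h.false i).elim⟩
  · obtain ⟨m, hm⟩ := Finite.exists_max f
    refine ⟨f m - w, fun i => ⟨?_, ?_⟩⟩
    · linarith [hf m i]
    · linarith [hm i]

/-- A finite set of points in the plane whose pairwise ℓ₁ distances are at
most `2w` admits a common station location within walking distance `w` of all of them. -/
theorem common_station_location (w : ℝ) (hw : 0 < w) (k : ℕ) (x : Fin k → ℝ × ℝ)
    (hx : ∀ i j, l1dist (x i) (x j) ≤ 2 * w) :
    ∃ s : ℝ × ℝ, ∀ i, l1dist s (x i) ≤ w := by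
  unfold l1dist at *
  obtain ⟨a, ha⟩ := exists_center w k (fun i => (x i).1 + (x i).2) (fun i j => by
    linarith [hx i j, le_abs_self ((x i).1 - (x j).1), le_abs_self ((x i).2 - (x j).2)])
  obtain ⟨b, hb⟩ := exists_center w k (fun i => (x i).1 - (x i).2) (fun i j => by
    linarith [hx i j, le_abs_self ((x i).1 - (x j).1), neg_abs_le ((x i).2 - (x j).2)])
  refine ⟨((a + b) / 2, (a - b) / 2), fun i => ?_⟩
  have h1 := ha i
  have h2 := hb i
  simp only at h1 h2 ⊢
  rcases abs_cases ((a + b) / 2 - (x i).1) with h | h <;>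
  rcases abs_cases ((a - b) / 2 - (x i).2) with h' | h' <;>
  linarith [h.1, h'.1, h1.1, h1.2, h2.1, h2.2]
end
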